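/- Let k be a field and R a finitely generated commutative k-algebra. Let P be a prime ideal of R containing every zero divisor of R, let y ∈ R be a nonzero element with annihilator J = ann_R(y) = {a ∈ R : a·y = 0}, and suppose J ⊆ P and the Krull dimension of R/J equals the Krull dimension of R/P. Then the radical of J equals P. -/

import Mathlib

/-!
Modulo the annihilator of `y`, every element `a` of a minimal prime `Q` kills the class of some
`b` with `b • y ≠ 0`; so `a` is a zero divisor and `Q ≤ P`. A strict inclusion `Q < P` out of a
prime drops the dimension of the quotient when `dim R/P` is finite, so comparing dimensions leaves
`P` as the only minimal prime, and the radical is the intersection of the minimal primes.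
-/

section

variable {R : Type*} [CommRing R]

theorem ringKrullDim_ne_top_of_finiteType (A : Type*) [CommRing A] [IsNoetherianRing A]
    [FiniteRingKrullDim A] [Algebra A R] [Algebra.FiniteType A R] : ringKrullDim R ≠ ⊤ := by
  obtain ⟨n, f, hf⟩ := Algebra.FiniteType.iff_quotient_mvPolynomial''.mp
    (inferInstance : Algebra.FiniteType A R)
  have hle : ringKrullDim R ≤ ringKrullDim A + n := by
    simpa [MvPolynomial.ringKrullDim_of_isNoetherianRing] using
      ringKrullDim_le_of_surjective f.toRingHom hf
  have hfin : ringKrullDim A + n ≠ ⊤ := by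
    rw [ringKrullDim, Order.krullDim_eq_length_of_finiteDimensionalOrder, ← Nat.cast_add]
    exact WithBot.coe_injective.ne (ENat.natCast_ne_top _)
  exact ne_top_of_le_ne_top hfin hle

theorem ringKrullDim_quotient_add_one_le_of_lt {Q P : Ideal R} [Q.IsPrime] (hQP : Q < P) :
    ringKrullDim (R ⧸ P) + 1 ≤ ringKrullDim (R ⧸ Q) := by
  obtain ⟨r, hrP, hrQ⟩ := SetLike.exists_of_lt hQP
  have hr : Ideal.Quotient.mk Q r ≠ 0 := mt Ideal.Quotient.eq_zero_iff_mem.mp hrQ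
  exact ringKrullDim_succ_le_of_surjective (Ideal.Quotient.factor hQP.le)
    (Ideal.Quotient.factor_surjective hQP.le) (mem_nonZeroDivisors_of_ne_zero hr)
    (Ideal.Quotient.eq_zero_iff_mem.mpr hrP)

theorem ringKrullDim_quotient_lt_of_lt {Q P : Ideal R} [Q.IsPrime] (hQP : Q < P)
    (hfin : ringKrullDim (R ⧸ P) ≠ ⊤) : ringKrullDim (R ⧸ P) < ringKrullDim (R ⧸ Q) := by
  have hsucc := ringKrullDim_quotient_add_one_le_of_lt hQP
  cases hd : ringKrullDim (R ⧸ P) with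
  | bot => exact (WithBot.bot_lt_coe 0).trans_le ringKrullDim_nonneg_of_nontrivial
  | coe d =>
    lift d to ℕ using fun htop ↦ hfin (by rw [hd, htop, WithBot.coe_top])
    rw [hd] at hsucc
    exact ENat.WithBot.add_one_le_iff.mp hsucc

theorem minimalPrimes_eq_singleton_of_ringKrullDim_quotient_le {J P : Ideal R} (hJ : J ≠ ⊤)
    (hle : ∀ Q ∈ J.minimalPrimes, Q ≤ P) (hfin : ringKrullDim (R ⧸ P) ≠ ⊤)
    (hdim : ringKrullDim (R ⧸ J) ≤ ringKrullDim (R ⧸ P)) : J.minimalPrimes = {P} := by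
  refine Set.eq_singleton_iff_nonempty_unique_mem.mpr
    ⟨Set.nonempty_coe_sort.mp (Ideal.nonempty_minimalPrimes hJ), fun Q hQ ↦ ?_⟩
  have : Q.IsPrime := hQ.1.1
  have hQJ : ringKrullDim (R ⧸ Q) ≤ ringKrullDim (R ⧸ J) :=
    ringKrullDim_le_of_surjective (Ideal.Quotient.factor hQ.1.2)
      (Ideal.Quotient.factor_surjective hQ.1.2)
  by_contra hne
  exact (ringKrullDim_quotient_lt_of_lt ((hle Q hQ).lt_of_ne hne) hfin).not_ge (hQJ.trans hdim)

variable {M : Type*} [AddCommGroup M] [Module R M]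

theorem exists_ne_zero_smul_eq_zero_of_mem_minimalPrimes_torsionOf {y : M} {Q : Ideal R}
    (hQ : Q ∈ (Ideal.torsionOf R M y).minimalPrimes) {a : R} (ha : a ∈ Q) :
    ∃ m : M, m ≠ 0 ∧ a • m = 0 := by
  obtain ⟨b, hb, hab⟩ := Ideal.exists_mul_mem_of_mem_minimalPrimes hQ ha
  rw [Ideal.mem_torsionOf_iff] at hb hab
  exact ⟨b • y, hb, by rwa [smul_smul]⟩

theorem radical_annihilator_eq_prime_general (P : Ideal R)
    (hfin : ringKrullDim (R ⧸ P) ≠ ⊤) (hP : ∀ (a : R) (m : M), m ≠ 0 → a • m = 0 → a ∈ P)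
    {y : M} (hy : y ≠ 0)
    (hdim : ringKrullDim (R ⧸ Ideal.torsionOf R M y) ≤ ringKrullDim (R ⧸ P)) :
    (Ideal.torsionOf R M y).radical = P := by
  have hproper : Ideal.torsionOf R M y ≠ ⊤ := by
    rwa [Ne, Ideal.torsionOf_eq_top_iff]
  have hle : ∀ Q ∈ (Ideal.torsionOf R M y).minimalPrimes, Q ≤ P := fun Q hQ a ha ↦
    have ⟨m, hm, ham⟩ := exists_ne_zero_smul_eq_zero_of_mem_minimalPrimes_torsionOf hQ ha
    hP a m hm ham
  rw [← Ideal.sInf_minimalPrimes,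
    minimalPrimes_eq_singleton_of_ringKrullDim_quotient_le hproper hle hfin hdim, sInf_singleton]

end

/-- Let `R` be a finitely generated commutative algebra over a field `k`, `P` a prime ideal
containing every zero divisor of `R`, and `y ≠ 0` with annihilator `J ⊆ P` such that
`dim R/J = dim R/P`.  Then `rad J = P`. -/
theorem radical_annihilator_eq_prime
    {k R : Type*} [Field k] [CommRing R] [Algebra k R] [Algebra.FiniteType k R]
    (P : Ideal R) [P.IsPrime]
    (hP : ∀ a b : R, b ≠ 0 → a * b = 0 → a ∈ P)
    (y : R) (hy : y ≠ 0)
    (J : Ideal R) (hJ : ∀ a : R, a ∈ J ↔ a * y = 0)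
    (hJP : J ≤ P)
    (hdim : ringKrullDim (R ⧸ J) = ringKrullDim (R ⧸ P)) :
    J.radical = P := by
  obtain rfl : J = Ideal.torsionOf R R y := Ideal.ext hJ
  exact radical_annihilator_eq_prime_general P (ringKrullDim_ne_top_of_finiteType k) hP hy hdim.le
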